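/- Let B be a symplectic form on a 2J-dimensional vector space V over F_2. Suppose Q₁, Q₂, Q₃, Q₄ are quadratic forms yielding B whose quadrics all have the same cardinality, with Q₁ ≠ Q₂ and Q₃ ≠ Q₄. Then there exists a linear automorphism A of V preserving B (i.e., B(Ax, Ay) = B(x,y) for all x, y ∈ V) such that Q₃(v) = Q₁(A⁻¹v) and Q₄(v) = Q₂(A⁻¹v) for all v ∈ V. In other words, the action (A·Q)(v) := Q(A⁻¹v) of the symplectic group Sp(B) on the set of all quadratic forms yielding B of either given sign is doubly transitive. -/

import Mathlib

/-!
Two quadratic forms yielding `B` differ by a functional `B a`, and completing the square shows that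
the Gauss sum of `Q + B a` is `(-1) ^ Q a` times that of `Q`. Gauss sums being nonzero, the two
forms have the same sign precisely when `Q a = 0`. The symplectic transvection
`v ↦ v + B(a, v) a` carries `Q` to `Q + B a` if `Q a = 0`, which gives transitivity on forms of a
given sign, and preserves `Q` if `Q a = 1`. Double transitivity amounts to the stabilizer of `Q`
acting transitively on nonzero singular vectors. If `B(a, b) = 1`, the transvection along `a + b`
preserves `Q` and maps `a` to `b`; in general one passes through a singular `d` with
`B(a, d) = B(d, b) = 1`.
-/

noncomputable section

/-- A bilinear form is symplectic: alternating and nondegenerate. -/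
def IsSymplectic {F V : Type*} [CommRing F] [AddCommGroup V] [Module F V]
    (B : V →ₗ[F] V →ₗ[F] F) : Prop :=
  (∀ v, B v v = 0) ∧ ∀ v : V, v ≠ 0 → ∃ w, B v w ≠ 0

/-- `Q` is a quadratic form yielding the bilinear form `B` over `F₂`. -/
def YieldsForm {V : Type*} [AddCommGroup V] [Module (ZMod 2) V]
    (B : V →ₗ[ZMod 2] V →ₗ[ZMod 2] ZMod 2) (Q : V → ZMod 2) : Prop :=
  ∀ v₁ v₂ : V, Q (v₁ + v₂) + Q v₁ + Q v₂ = B v₁ v₂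

/-- The quadric of a quadratic form: its set of zeros. -/
def quadric {V : Type*} (Q : V → ZMod 2) : Set V := {v | Q v = 0}

theorem exists_apply_ne_zero_and_apply_ne_zero {R M N P : Type*} [Semiring R]
    [AddCommMonoid M] [AddCommMonoid N] [AddCommMonoid P] [Module R M] [Module R N] [Module R P]
    {f : M →ₗ[R] N} {g : M →ₗ[R] P} (hf : f ≠ 0) (hg : g ≠ 0) :
    ∃ x, f x ≠ 0 ∧ g x ≠ 0 := by
  obtain ⟨x, hfx⟩ := DFunLike.ne_iff.1 hf
  obtain ⟨y, hgy⟩ := DFunLike.ne_iff.1 hg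
  by_cases hgx : g x = 0
  · by_cases hfy : f y = 0
    · exact ⟨x + y, by simpa [hfy] using hfx, by simpa [hgx] using hgy⟩
    · exact ⟨y, hfy, hgy⟩
  · exact ⟨x, hfx, hgx⟩

theorem apply_ne_zero_of_separatingLeft {R M N P : Type*} [CommSemiring R]
    [AddCommMonoid M] [AddCommMonoid N] [AddCommMonoid P] [Module R M] [Module R N] [Module R P]
    {B : M →ₗ[R] N →ₗ[R] P} (hB : B.SeparatingLeft) {x : M} (hx : x ≠ 0) : B x ≠ 0 :=
  mt (LinearMap.separatingLeft_iff_linear_nontrivial.1 hB x) hx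

theorem IsSymplectic.nondegenerate {F V : Type*} [CommRing F] [AddCommGroup V] [Module F V]
    {B : V →ₗ[F] V →ₗ[F] F} (hB : IsSymplectic B) : B.Nondegenerate := by
  have hAlt : B.IsAlt := hB.1
  refine hAlt.isRefl.nondegenerate_iff_separatingLeft.2 fun v hv => ?_
  by_contra hv0
  obtain ⟨w, hw⟩ := hB.2 v hv0
  exact hw (hv w)

/-- The nontrivial character `x ↦ (-1) ^ x` of `F₂`, with integer values. -/
def signChar : AddChar (ZMod 2) ℤ := AddChar.zmodChar 2 neg_one_sq

theorem signChar_eq_one_iff : ∀ {x : ZMod 2}, signChar x = 1 ↔ x = 0 := by decide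

/-- The Gauss sum `∑ v, (-1) ^ Q v`; for a quadratic form yielding a symplectic form it is
`± 2 ^ J`, with the sign of `Q`. -/
def signSum {V : Type*} [Fintype V] (Q : V → ZMod 2) : ℤ := ∑ v, signChar (Q v)

theorem signSum_eq_ncard_quadric {V : Type*} [Fintype V] (Q : V → ZMod 2) :
    signSum Q = 2 * (quadric Q).ncard - Fintype.card V := by
  have hsign : ∀ x : ZMod 2, signChar x = 2 * (if x = 0 then 1 else 0) - 1 := by decide
  have hncard : (quadric Q).ncard = (Finset.univ.filter fun v => Q v = 0).card := by
    simp [← Set.ncard_coe_finset, quadric]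
  simp only [signSum, hsign, Finset.sum_sub_distrib, ← Finset.mul_sum, Finset.sum_boole, hncard]
  simp

theorem sum_signChar_eq_zero {V : Type*} [AddCommGroup V] [Module (ZMod 2) V] [Fintype V]
    {f : Module.Dual (ZMod 2) V} (hf : f ≠ 0) : ∑ v, signChar (f v) = 0 := by
  obtain ⟨v, hv⟩ := DFunLike.ne_iff.1 hf
  refine (AddChar.sum_eq_zero_iff_ne_zero (ψ := signChar.compAddMonoidHom f.toAddMonoidHom)).2 ?_
  exact AddChar.ne_zero_iff.2 ⟨v, fun h => hv (signChar_eq_one_iff.1 h)⟩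

namespace YieldsForm

variable {V : Type*} [AddCommGroup V] [Module (ZMod 2) V]
  {B : V →ₗ[ZMod 2] V →ₗ[ZMod 2] ZMod 2} {Q Q' : V → ZMod 2}

protected theorem map_add (h : YieldsForm B Q) (v w : V) : Q (v + w) = Q v + Q w + B v w := by
  rw [← h v w]
  grind

protected theorem map_zero (h : YieldsForm B Q) : Q 0 = 0 := by
  simpa using h.map_add 0 0

theorem isAlt (h : YieldsForm B Q) : B.IsAlt := fun v => by
  rw [← h v v, ZModModule.add_self, h.map_zero, zero_add, CharTwo.add_self_eq_zero]

theorem symm (h : YieldsForm B Q) (v w : V) : B v w = B w v := by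
  rw [← h v w, ← h w v, add_comm v w, add_right_comm]

theorem map_bilin_of_comp_eq {V' : Type*} [AddCommGroup V'] [Module (ZMod 2) V']
    {B' : V' →ₗ[ZMod 2] V' →ₗ[ZMod 2] ZMod 2} {Q' : V' → ZMod 2}
    (h : YieldsForm B Q) (h' : YieldsForm B' Q') {A : V →ₗ[ZMod 2] V'}
    (hA : ∀ v, Q' (A v) = Q v) (v w : V) : B' (A v) (A w) = B v w := by
  rw [← h' (A v) (A w), ← h v w, ← map_add, hA, hA, hA]

theorem apply_transvection (h : YieldsForm B Q) (a v : V) :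
    Q (LinearEquiv.transvection (h.isAlt a) v) = Q v + (Q a + 1) * B a v := by
  rw [LinearEquiv.transvection.apply]
  by_cases hav : B a v = 0
  · simp [hav]
  · have hav1 : B a v = 1 := Fin.eq_one_of_ne_zero _ hav
    rw [hav1, one_smul, h.map_add, h.symm, hav1]
    ring

section Singular

variable {a b : V}

theorem exists_isometry_of_apply_eq_one (h : YieldsForm B Q) (ha : Q a = 0) (hb : Q b = 0)
    (hab : B a b = 1) : ∃ g : V ≃ₗ[ZMod 2] V, (∀ v, Q (g v) = Q v) ∧ g a = b := by
  have hQ : Q (a + b) = 1 := by simp [h.map_add, ha, hb, hab]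
  refine ⟨LinearEquiv.transvection (h.isAlt (a + b)), fun v => ?_, ?_⟩
  · rw [h.apply_transvection, hQ, CharTwo.add_self_eq_zero, zero_mul, add_zero]
  · have hval : B (a + b) a = 1 := by simp [h.isAlt a, h.symm b a, hab]
    rw [LinearEquiv.transvection.apply, hval, one_smul, ← add_assoc, ZModModule.add_self, zero_add]

theorem exists_singular_apply_eq_one (hB : B.Nondegenerate) (h : YieldsForm B Q)
    (ha₀ : a ≠ 0) (hb₀ : b ≠ 0) (ha : Q a = 0) (hab : B a b = 0) :
    ∃ d, Q d = 0 ∧ B a d = 1 ∧ B d b = 1 := by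
  obtain ⟨u, hau, hbu⟩ := exists_apply_ne_zero_and_apply_ne_zero
    (apply_ne_zero_of_separatingLeft hB.1 ha₀) (apply_ne_zero_of_separatingLeft hB.1 hb₀)
  replace hau : B a u = 1 := Fin.eq_one_of_ne_zero _ hau
  replace hbu : B b u = 1 := Fin.eq_one_of_ne_zero _ hbu
  by_cases hu : Q u = 0
  · exact ⟨u, hu, hau, h.symm u b ▸ hbu⟩
  · have hu1 : Q u = 1 := Fin.eq_one_of_ne_zero _ hu
    refine ⟨u + a, ?_, ?_, ?_⟩
    · rw [h.map_add, hu1, ha, h.symm, hau, add_zero, CharTwo.add_self_eq_zero]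
    · rw [map_add, hau, h.isAlt, add_zero]
    · rw [map_add, LinearMap.add_apply, h.symm, hbu, hab, add_zero]

theorem exists_isometry_apply_eq (hB : B.Nondegenerate) (h : YieldsForm B Q)
    (ha₀ : a ≠ 0) (hb₀ : b ≠ 0) (ha : Q a = 0) (hb : Q b = 0) :
    ∃ g : V ≃ₗ[ZMod 2] V, (∀ v, Q (g v) = Q v) ∧ g a = b := by
  by_cases hab : B a b = 0
  · obtain ⟨d, hd, had, hdb⟩ := h.exists_singular_apply_eq_one hB ha₀ hb₀ ha hab
    obtain ⟨g, hg, hga⟩ := h.exists_isometry_of_apply_eq_one ha hd had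
    obtain ⟨g', hg', hgd⟩ := h.exists_isometry_of_apply_eq_one hd hb hdb
    exact ⟨g.trans g', fun v => (hg' (g v)).trans (hg v), (congrArg g' hga).trans hgd⟩
  · exact h.exists_isometry_of_apply_eq_one ha hb (Fin.eq_one_of_ne_zero _ hab)

end Singular

theorem exists_eq_add_apply [FiniteDimensional (ZMod 2) V] (hB : B.Nondegenerate)
    (h : YieldsForm B Q) (h' : YieldsForm B Q') : ∃ a, ∀ v, Q' v = Q v + B a v := by
  let difference : Module.Dual (ZMod 2) V :=
    (AddMonoidHom.mk' (fun v => Q v + Q' v) fun v w => by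
      rw [h.map_add, h'.map_add]; grind).toZModLinearMap 2
  obtain ⟨a, ha⟩ := (LinearMap.BilinForm.toDual B hB).surjective difference
  refine ⟨a, fun v => ?_⟩
  have hav : B a v = Q v + Q' v := DFunLike.congr_fun ha v
  rw [hav, CharTwo.add_cancel_left]

theorem signSum_sq [Fintype V] (hB : B.Nondegenerate) (h : YieldsForm B Q) :
    signSum Q ^ 2 = Fintype.card V := by
  have hsum : ∀ w ≠ 0, ∑ v, signChar (B w v) = 0 := fun w hw =>
    sum_signChar_eq_zero (apply_ne_zero_of_separatingLeft hB.1 hw)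
  calc
    signSum Q ^ 2 = ∑ v, ∑ w, signChar (Q v + Q w) := by
      simp only [signSum, sq, Finset.sum_mul_sum, AddChar.map_add_eq_mul]
    _ = ∑ v, ∑ w, signChar (Q v + Q (w + v)) :=
      Finset.sum_congr rfl fun v _ =>
        (Equiv.sum_comp (Equiv.addRight v) fun w => signChar (Q v + Q w)).symm
    _ = ∑ v, ∑ w, signChar (Q w) * signChar (B w v) := by
      refine Finset.sum_congr rfl fun v _ => Finset.sum_congr rfl fun w _ => ?_
      rw [h.map_add, ← AddChar.map_add_eq_mul]
      congr 1
      grind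
    _ = ∑ w, signChar (Q w) * ∑ v, signChar (B w v) := by
      rw [Finset.sum_comm]
      simp only [Finset.mul_sum]
    _ = signChar (Q 0) * ∑ v, signChar (B 0 v) :=
      Fintype.sum_eq_single 0 fun w hw => by rw [hsum w hw, mul_zero]
    _ = Fintype.card V := by simp [h.map_zero]

theorem signSum_ne_zero [Fintype V] (hB : B.Nondegenerate) (h : YieldsForm B Q) :
    signSum Q ≠ 0 := by
  rw [← sq_pos_iff, h.signSum_sq hB]
  exact_mod_cast Fintype.card_pos

theorem signSum_add_apply [Fintype V] (h : YieldsForm B Q) (a : V) :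
    signSum (fun v => Q v + B a v) = signChar (Q a) * signSum Q := by
  have hshift : ∀ v, Q v + B a v = Q a + Q (a + v) := fun v => by
    rw [h.map_add]
    grind
  simp only [signSum, hshift, AddChar.map_add_eq_mul, ← Finset.mul_sum]
  exact congrArg _ (Equiv.sum_comp (Equiv.addLeft a) fun v => signChar (Q v))

theorem exists_singular_eq_add_apply [Finite V] (hB : B.Nondegenerate)
    (h : YieldsForm B Q) (h' : YieldsForm B Q') (hc : (quadric Q').ncard = (quadric Q).ncard) :
    ∃ a, Q a = 0 ∧ ∀ v, Q' v = Q v + B a v := by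
  have := Fintype.ofFinite V
  obtain ⟨a, ha⟩ := h.exists_eq_add_apply hB h'
  refine ⟨a, signChar_eq_one_iff.1 ?_, ha⟩
  have hsum : signChar (Q a) * signSum Q = signSum Q := by
    rw [← h.signSum_add_apply, ← funext ha, signSum_eq_ncard_quadric, hc,
      ← signSum_eq_ncard_quadric]
  exact (mul_eq_right₀ (h.signSum_ne_zero hB)).1 hsum

theorem exists_linearEquiv_comp_eq [Finite V] (hB : B.Nondegenerate)
    (h : YieldsForm B Q) (h' : YieldsForm B Q') (hc : (quadric Q').ncard = (quadric Q).ncard) :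
    ∃ A : V ≃ₗ[ZMod 2] V, ∀ v, Q' (A v) = Q v := by
  obtain ⟨a, ha, hQ⟩ := h'.exists_singular_eq_add_apply hB h hc.symm
  refine ⟨LinearEquiv.transvection (h'.isAlt a), fun v => ?_⟩
  rw [h'.apply_transvection, ha, zero_add, one_mul, hQ]

end YieldsForm

/-- The action `(A·Q)(v) = Q(A⁻¹v)` of the symplectic group
`Sp(B)` on the set of quadratic forms yielding `B` of either given sign is
doubly transitive: any ordered pair of distinct forms whose quadrics have the
same cardinality can be mapped to any other such pair. -/
theorem Sp_doubly_transitive_on_quadratic_forms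
    {J : ℕ} (hJ : 0 < J)
    {V : Type*} [AddCommGroup V] [Module (ZMod 2) V] [Fintype V] [DecidableEq V]
    (hdim : Module.finrank (ZMod 2) V = 2 * J)
    (B : V →ₗ[ZMod 2] V →ₗ[ZMod 2] ZMod 2) (hB : IsSymplectic B)
    (Q₁ Q₂ Q₃ Q₄ : V → ZMod 2)
    (h₁ : YieldsForm B Q₁) (h₂ : YieldsForm B Q₂)
    (h₃ : YieldsForm B Q₃) (h₄ : YieldsForm B Q₄)
    (hc₂ : (quadric Q₂).ncard = (quadric Q₁).ncard)
    (hc₃ : (quadric Q₃).ncard = (quadric Q₁).ncard)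
    (hc₄ : (quadric Q₄).ncard = (quadric Q₁).ncard)
    (h12 : Q₁ ≠ Q₂) (h34 : Q₃ ≠ Q₄) :
    ∃ A : V ≃ₗ[ZMod 2] V,
      (∀ x y : V, B (A x) (A y) = B x y) ∧
      (∀ v : V, Q₃ v = Q₁ (A.symm v)) ∧
      (∀ v : V, Q₄ v = Q₂ (A.symm v)) := by
  have hnd := hB.nondegenerate
  obtain ⟨a, ha, hQ₂⟩ := h₁.exists_singular_eq_add_apply hnd h₂ hc₂
  obtain ⟨b, hb, hQ₄⟩ := h₃.exists_singular_eq_add_apply hnd h₄ (hc₄.trans hc₃.symm)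
  have ha₀ : a ≠ 0 := by
    rintro rfl
    exact h12 (funext fun v => by simp [hQ₂])
  have hb₀ : b ≠ 0 := by
    rintro rfl
    exact h34 (funext fun v => by simp [hQ₄])
  obtain ⟨A, hA⟩ := h₁.exists_linearEquiv_comp_eq hnd h₃ hc₃
  obtain ⟨g, hg, hgb⟩ := h₃.exists_isometry_apply_eq hnd (A.map_ne_zero_iff.2 ha₀) hb₀
    ((hA a).trans ha) hb
  have hA₁ : ∀ v, Q₃ (g (A v)) = Q₁ v := fun v => (hg (A v)).trans (hA v)
  have hBA : ∀ v w, B (g (A v)) (g (A w)) = B v w :=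
    h₁.map_bilin_of_comp_eq h₃ (A := (A.trans g).toLinearMap) hA₁
  have hA₂ : ∀ v, Q₄ (g (A v)) = Q₂ v := fun v => by rw [hQ₄, hQ₂, hA₁, ← hgb, hBA]
  exact ⟨A.trans g, hBA, fun v => by simp [← hA₁], fun v => by simp [← hA₂]⟩
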